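/- Let h ∈ ℝ with 2h not a nonpositive integer and h ≠ 1/2, and set q_R = 1/(2h−1). Then the operators D = d/dz and F on ℂ[z] satisfy the Lobachevskii–Berezin relations: (F∘D)∘(D∘F) = (D∘F)∘(F∘D), and D∘F − F∘D = q_R·(id − D∘F)∘(id − F∘D). -/

import Mathlib

open Polynomial

/-- Multiplication by `z` on `ℂ[z]`: the generator `l₋₁`. -/
noncomputable def lNeg : Module.End ℂ (Polynomial ℂ) :=
  LinearMap.mulLeft ℂ (Polynomial.X : Polynomial ℂ)

/-- The differentiation operator `D = d/dz` on `ℂ[z]`. -/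
noncomputable def Dop : Module.End ℂ (Polynomial ℂ) :=
  Polynomial.derivative

/-- The generator `l₀ = z·d/dz + h·id`. -/
noncomputable def lZero (h : ℝ) : Module.End ℂ (Polynomial ℂ) :=
  lNeg * Dop + (h : ℂ) • 1

/-- The generator `l₁ = z·d²/dz² + 2h·d/dz`. -/
noncomputable def lOne (h : ℝ) : Module.End ℂ (Polynomial ℂ) :=
  lNeg * Dop * Dop + ((2 * h : ℝ) : ℂ) • Dop

/-!
Let `T = xd + c`, where `dx = xd + 1`; for `x = z`, `d = d/dz` and `c = 2h` this is `l₀ + h`. The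
operator `F` is the quotient `x T⁻¹`. Since `x` raises and `d` lowers the degree counted by `T`,
both `dF` and `Fd` commute with `T`. Now `(dF) T = dx = T - (c - 1)`, so `dF` and `Fd` commute, and
`(1 - dF) T = c - 1` turns `(c - 1)(dF - Fd)` into `(1 - dF)(T(dF) - T(Fd))`, whose second factor
is `1 - Fd`. On polynomials `T` is diagonal in the monomials, with eigenvalues `n + c`.
-/

section WeylRelation

variable {R A : Type*} [CommRing R] [Ring A] [Algebra R A]

/-- The Euler operator `x d` shifted by the scalar `c`. On `ℂ[z]`, with `x = z`, `d = d/dz` and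
`c = 2h`, it is `l₀ + h`; the operator `F` is the quotient of `z` by it. -/
def shiftedEuler (x d : A) (c : R) : A :=
  x * d + c • 1

variable {x d f : A} {c : R}

namespace shiftedEuler

theorem mul_raising (hdx : d * x = x * d + 1) :
    shiftedEuler x d c * x = x * shiftedEuler x d c + x := by
  rw [shiftedEuler, add_mul, mul_add, mul_assoc, hdx, mul_add, smul_one_mul, mul_smul_one, mul_one]
  abel

theorem lowering_mul (hdx : d * x = x * d + 1) :
    d * shiftedEuler x d c = shiftedEuler x d c * d + d := by
  rw [shiftedEuler, mul_add, add_mul, ← mul_assoc, hdx, add_mul, smul_one_mul, mul_smul_one,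
    one_mul]
  abel

theorem mul_quotient (hdx : d * x = x * d + 1) (hT : IsRightRegular (shiftedEuler x d c))
    (hf : f * shiftedEuler x d c = x) :
    shiftedEuler x d c * f = x + f :=
  hT <| by
    change shiftedEuler x d c * f * shiftedEuler x d c = (x + f) * shiftedEuler x d c
    rw [mul_assoc, hf, add_mul, hf, mul_raising hdx]

theorem mul_quotient_mul_lowering (hdx : d * x = x * d + 1)
    (hT : IsRightRegular (shiftedEuler x d c)) (hf : f * shiftedEuler x d c = x) :
    shiftedEuler x d c * (f * d) = x * d + f * d := by
  rw [← mul_assoc, mul_quotient hdx hT hf, add_mul]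

theorem lowering_mul_quotient_mul (hdx : d * x = x * d + 1) (hf : f * shiftedEuler x d c = x) :
    d * f * shiftedEuler x d c = x * d + 1 := by
  rw [mul_assoc, hf, hdx]

theorem mul_lowering_mul_quotient (hdx : d * x = x * d + 1)
    (hT : IsRightRegular (shiftedEuler x d c)) (hf : f * shiftedEuler x d c = x) :
    shiftedEuler x d c * (d * f) = x * d + 1 := by
  have hTd : shiftedEuler x d c * d = d * shiftedEuler x d c - d :=
    eq_sub_of_add_eq (lowering_mul hdx).symm
  rw [← mul_assoc, hTd, sub_mul, mul_assoc, mul_quotient hdx hT hf, mul_add, add_sub_cancel_right,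
    hdx]

theorem commute_quotient_mul_lowering (hdx : d * x = x * d + 1)
    (hT : IsRightRegular (shiftedEuler x d c)) (hf : f * shiftedEuler x d c = x) :
    Commute (shiftedEuler x d c) (f * d) := by
  rw [commute_iff_eq, mul_quotient_mul_lowering hdx hT hf, mul_assoc, lowering_mul hdx, mul_add,
    ← mul_assoc, hf]

theorem commute_mul_quotient (hdx : d * x = x * d + 1)
    (hT : IsRightRegular (shiftedEuler x d c)) (hf : f * shiftedEuler x d c = x) :
    Commute (f * d) (d * f) := by
  have hTB : Commute (shiftedEuler x d c) (f * d) := commute_quotient_mul_lowering hdx hT hf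
  have hEuler : x * d = shiftedEuler x d c - c • 1 := eq_sub_of_add_eq rfl
  have hEulerB : Commute (f * d) (x * d + 1) := by
    rw [hEuler]
    exact (hTB.symm.sub_right ((Commute.one_right _).smul_right c)).add_right (Commute.one_right _)
  refine hT ?_
  calc f * d * (d * f) * shiftedEuler x d c
      = f * d * (x * d + 1) := by rw [mul_assoc, lowering_mul_quotient_mul hdx hf]
    _ = (x * d + 1) * (f * d) := hEulerB
    _ = d * f * (shiftedEuler x d c * (f * d)) := by
        rw [← lowering_mul_quotient_mul hdx hf, mul_assoc]
    _ = d * f * (f * d) * shiftedEuler x d c := by rw [hTB.eq, ← mul_assoc]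

theorem smul_commutator_quotient (hdx : d * x = x * d + 1)
    (hT : IsRightRegular (shiftedEuler x d c)) (hf : f * shiftedEuler x d c = x) :
    (c - 1) • (d * f - f * d) = (1 - d * f) * (1 - f * d) := by
  have hscalar : (1 - d * f) * shiftedEuler x d c = (c - 1) • 1 := by
    rw [sub_mul, one_mul, lowering_mul_quotient_mul hdx hf, shiftedEuler, sub_smul, one_smul]
    abel
  calc (c - 1) • (d * f - f * d)
      = (1 - d * f) * shiftedEuler x d c * (d * f - f * d) := by rw [hscalar, smul_one_mul]
    _ = (1 - d * f) * (shiftedEuler x d c * (d * f) - shiftedEuler x d c * (f * d)) := by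
        rw [mul_assoc, mul_sub]
    _ = (1 - d * f) * (1 - f * d) := by
        rw [mul_lowering_mul_quotient hdx hT hf, mul_quotient_mul_lowering hdx hT hf,
          add_sub_add_left_eq_sub]

end shiftedEuler

end WeylRelation

section PolynomialModule

variable {R : Type*} [CommRing R] {c : R}

theorem derivative_mul_mulLeft_X :
    (derivative : Module.End R R[X]) * LinearMap.mulLeft R X =
      LinearMap.mulLeft R X * derivative + 1 :=
  LinearMap.ext fun p => by simp [derivative_mul, add_comm]

theorem shiftedEuler_X_pow (n : ℕ) :
    shiftedEuler (LinearMap.mulLeft R X) (derivative : Module.End R R[X]) c (X ^ n) =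
      ((n : R) + c) • (X : R[X]) ^ n := by
  cases n with
  | zero => simp [shiftedEuler]
  | succ k =>
    simp [shiftedEuler, smul_eq_C_mul]
    ring

theorem isRightRegular_shiftedEuler (hc : ∀ n : ℕ, IsUnit ((n : R) + c)) :
    IsRightRegular (shiftedEuler (LinearMap.mulLeft R X) (derivative : Module.End R R[X]) c) := by
  intro F G hFG
  refine lhom_ext' fun n => LinearMap.ext_ring ?_
  have hn := LinearMap.congr_fun hFG (X ^ n)
  simp only [Module.End.mul_apply, shiftedEuler_X_pow, map_smul] at hn
  simpa only [LinearMap.comp_apply, monomial_one_right_eq_X_pow] using (hc n).smul_left_cancel.1 hn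

theorem mul_shiftedEuler_eq_mulLeft_X {F : Module.End R R[X]}
    (hF : ∀ n : ℕ, ((n : R) + c) • F (X ^ n) = X ^ (n + 1)) :
    F * shiftedEuler (LinearMap.mulLeft R X) derivative c = LinearMap.mulLeft R X := by
  refine lhom_ext' fun n => LinearMap.ext_ring ?_
  simp only [LinearMap.comp_apply, monomial_one_right_eq_X_pow, Module.End.mul_apply,
    shiftedEuler_X_pow, map_smul, hF, LinearMap.mulLeft_apply, pow_succ']

theorem isUnit_of_smul_eq_X_pow {a : R} {p : R[X]} {n : ℕ} (h : a • p = X ^ n) : IsUnit a :=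
  IsUnit.of_mul_eq_one (p.coeff n) <| by rw [← smul_eq_mul, ← coeff_smul, h, coeff_X_pow_self]

end PolynomialModule

theorem stmt3_general {R : Type*} [CommRing R] (c : R) (F : Module.End R R[X])
    (hF : ∀ n : ℕ, ((n : R) + c) • F (X ^ n) = X ^ (n + 1)) :
    (F * derivative) * (derivative * F) = (derivative * F) * (F * derivative) ∧
    (c - 1) • (derivative * F - F * derivative) =
      (1 - derivative * F) * (1 - F * derivative) := by
  have hT := isRightRegular_shiftedEuler fun n => isUnit_of_smul_eq_X_pow (hF n)
  have hFT := mul_shiftedEuler_eq_mulLeft_X hF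
  exact ⟨shiftedEuler.commute_mul_quotient derivative_mul_mulLeft_X hT hFT,
    shiftedEuler.smul_commutator_quotient derivative_mul_mulLeft_X hT hFT⟩

theorem natCast_add_two_mul_ne_zero {h : ℝ} (hh : ∀ n : ℕ, 2 * h ≠ -(n : ℝ)) (n : ℕ) :
    (n : ℂ) + 2 * h ≠ 0 :=
  mod_cast fun hn : (n : ℝ) + 2 * h = 0 => hh n (eq_neg_of_add_eq_zero_right hn)

theorem two_mul_sub_one_ne_zero {h : ℝ} (hh : h ≠ 1 / 2) : 2 * (h : ℂ) - 1 ≠ 0 :=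
  mod_cast fun hn : 2 * h - 1 = 0 => hh (by linarith)

/-- the Lobachevskii–Berezin relations for `D` and `F`. -/
theorem stmt3 (h : ℝ) (hh : ∀ n : ℕ, 2 * h ≠ -(n : ℝ)) (hh' : h ≠ 1 / 2)
    (F : Module.End ℂ (Polynomial ℂ))
    (hF : ∀ n : ℕ, F (Polynomial.X ^ n) = ((n : ℂ) + 2 * h)⁻¹ • Polynomial.X ^ (n + 1)) :
    (F * Dop) * (Dop * F) = (Dop * F) * (F * Dop) ∧
    Dop * F - F * Dop =
      (2 * (h : ℂ) - 1)⁻¹ • ((1 - Dop * F) * (1 - F * Dop)) := by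
  obtain ⟨hcomm, hrel⟩ := stmt3_general (2 * (h : ℂ)) F fun n => by
    rw [hF, smul_inv_smul₀ (natCast_add_two_mul_ne_zero hh n)]
  exact ⟨hcomm, (eq_inv_smul_iff₀ (two_mul_sub_one_ne_zero hh')).2 hrel⟩
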